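/- Existence of the infinite Viterbi path from infinitely many separated nodes: let x_{1:∞} ∈ 𝒳^∞, r ≥ 1, i ∈ 𝒴, and let u₁ < u₂ < ⋯ be a strictly increasing sequence of times such that each u_k is an i-node of order r for x_{1:u_k+r} and u_{k+1} ≥ u_k + r for all k. Then there exists an infinite Viterbi path v_{1:∞} of x_{1:∞}, which moreover satisfies v_{u_k} = i for every k. -/

import Mathlib

open scoped BigOperators

namespace PMMViterbi

variable {𝒳 𝒴 : Type*} [Fintype 𝒴] [Nonempty 𝒴]

/-- Product of transition weights `∏_{k=t+1}^{n} q(x_k, y_k | x_{k-1}, y_{k-1})`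
along the path `y`, for observations `x` (sequences are indexed starting from 1). -/
noncomputable def prodQ (q : 𝒳 × 𝒴 → 𝒳 × 𝒴 → ℝ) (x : ℕ → 𝒳) (y : ℕ → 𝒴) (t n : ℕ) : ℝ :=
  ∏ k ∈ Finset.Ioc t n, q (x k, y k) (x (k - 1), y (k - 1))

/-- `p(x_{1:n}, y_{1:n}) = p₁(x₁,y₁) · ∏_{k=2}^n q(x_k,y_k|x_{k-1},y_{k-1})`. -/
noncomputable def pJoint (q : 𝒳 × 𝒴 → 𝒳 × 𝒴 → ℝ) (p1 : 𝒳 × 𝒴 → ℝ)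
    (x : ℕ → 𝒳) (y : ℕ → 𝒴) (n : ℕ) : ℝ :=
  p1 (x 1, y 1) * prodQ q x y 1 n

/-- `δ_t(i)`: the maximum of `p(x_{1:t}, y_{1:t})` over paths with `y_t = i`. -/
noncomputable def delta (q : 𝒳 × 𝒴 → 𝒳 × 𝒴 → ℝ) (p1 : 𝒳 × 𝒴 → ℝ)
    (x : ℕ → 𝒳) (t : ℕ) (i : 𝒴) : ℝ :=
  ⨆ (y : ℕ → 𝒴) (_ : y t = i), pJoint q p1 x y t

/-- `p_{ij}(x_{t:n})`: the maximum of `∏_{k=t+1}^n q(x_k,y_k|x_{k-1},y_{k-1})`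
over paths with `y_t = i` and `y_n = j`. -/
noncomputable def pTrans (q : 𝒳 × 𝒴 → 𝒳 × 𝒴 → ℝ) (x : ℕ → 𝒳) (t n : ℕ) (i j : 𝒴) : ℝ :=
  ⨆ (y : ℕ → 𝒴) (_ : y t = i ∧ y n = j), prodQ q x y t n

/-- Time `t` is an `i`-node of order `m - t` for `x_{1:m}`. -/
def IsNode (q : 𝒳 × 𝒴 → 𝒳 × 𝒴 → ℝ) (p1 : 𝒳 × 𝒴 → ℝ)
    (x : ℕ → 𝒳) (t m : ℕ) (i : 𝒴) : Prop :=
  ∀ j k : 𝒴, delta q p1 x t k * pTrans q x t m k j ≤ delta q p1 x t i * pTrans q x t m i j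

/-- Time `t` is a strong `i`-node of order `m - t` for `x_{1:m}`. -/
def IsStrongNode (q : 𝒳 × 𝒴 → 𝒳 × 𝒴 → ℝ) (p1 : 𝒳 × 𝒴 → ℝ)
    (x : ℕ → 𝒳) (t m : ℕ) (i : 𝒴) : Prop :=
  IsNode q p1 x t m i ∧
    ∀ j k : 𝒴, k ≠ i → 0 < delta q p1 x t i * pTrans q x t m i j →
      delta q p1 x t k * pTrans q x t m k j < delta q p1 x t i * pTrans q x t m i j

/-- `v` is a Viterbi path of `x_{1:n}`: it maximizes `y ↦ p(x_{1:n}, y_{1:n})`. -/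
def IsViterbi (q : 𝒳 × 𝒴 → 𝒳 × 𝒴 → ℝ) (p1 : 𝒳 × 𝒴 → ℝ)
    (x : ℕ → 𝒳) (n : ℕ) (v : ℕ → 𝒴) : Prop :=
  ∀ y : ℕ → 𝒴, pJoint q p1 x y n ≤ pJoint q p1 x v n

/-- `v` is an infinite Viterbi path of `x_{1:∞}`: for every `t ≥ 1` there is `m ≥ t`
such that for every `n ≥ m` some Viterbi path of `x_{1:n}` agrees with `v`
on coordinates `1, …, t`. -/
def IsInfViterbi (q : 𝒳 × 𝒴 → 𝒳 × 𝒴 → ℝ) (p1 : 𝒳 × 𝒴 → ℝ)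
    (x : ℕ → 𝒳) (v : ℕ → 𝒴) : Prop :=
  ∀ t : ℕ, 1 ≤ t → ∃ m : ℕ, t ≤ m ∧ ∀ n : ℕ, m ≤ n →
    ∃ w : ℕ → 𝒴, IsViterbi q p1 x n w ∧ ∀ s : ℕ, 1 ≤ s → s ≤ t → w s = v s

/-!
In the (max, ·) semiring `delta` and `pTrans` compose by Bellman's principle, so an `i`-node `t` of
some order is an `i`-node of every larger order. Hence `delta n j = delta t i * pTrans t n i j` for
all later `n` and all `j`: any optimal path to `(t, i)` is the beginning of an optimal path to
`(n, j)`. Gluing optimal segments between consecutive nodes therefore yields a single path that is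
optimal up to each node, and each of its prefixes ending at a node extends to a Viterbi path of
every sufficiently long observation sequence.
-/

section Paths

variable {ι α β : Type*}

lemma finite_range_of_dependsOn [Finite α] [Nonempty β] {f : (ι → α) → β} {s : Set ι}
    (hs : s.Finite) (hf : DependsOn f s) : (Set.range f).Finite := by
  obtain ⟨g, rfl⟩ := dependsOn_iff_exists_comp.1 hf
  have := hs.to_subtype
  exact (Set.finite_range g).subset (Set.range_comp_subset_range _ _)

lemma eqOn_Ici_piecewise_Iic [LinearOrder ι] {t : ι} {a b : ι → α} (h : a t = b t) :
    Set.EqOn ((Set.Iic t).piecewise a b) b (Set.Ici t) := by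
  rintro s (hs : t ≤ s)
  rcases hs.eq_or_lt with rfl | hs
  · simpa using h
  · exact Set.piecewise_eq_of_notMem _ _ _ (Set.notMem_Iic.2 hs)

lemma exists_eqOn_Icc_of_eq_succ {u : ℕ → ℕ} (hu : StrictMono u) {b : ℕ → ℕ → α}
    (h : ∀ k, b k (u (k + 1)) = b (k + 1) (u (k + 1))) :
    ∃ v : ℕ → α, ∀ k, Set.EqOn v (b k) (Set.Icc (u k) (u (k + 1))) := by
  have hfirst (s : ℕ) : ∃ k, s ≤ u (k + 1) ∧ ∀ l, s ≤ u (l + 1) → k ≤ l := by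
    classical
    have hex : ∃ k, s ≤ u (k + 1) := ⟨s, hu.le_apply.trans (hu.monotone s.le_succ)⟩
    exact ⟨Nat.find hex, Nat.find_spec hex, fun _ => Nat.find_min' hex⟩
  choose κ hκ hκ_le using hfirst
  refine ⟨fun s => b (κ s) s, fun k s ⟨hks, hsk⟩ => ?_⟩
  rcases (hκ_le s k hsk).eq_or_lt with heq | hlt
  · simp only [heq]
  · have hk : k = κ s + 1 := (hu.le_iff_le.1 (hks.trans (hκ s))).antisymm hlt
    have hs : s = u k := (hk ▸ hκ s).antisymm hks
    calc b (κ s) s = b (κ s) (u (κ s + 1)) := by rw [← hk, ← hs]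
      _ = b (κ s + 1) (u (κ s + 1)) := h _
      _ = b k s := by rw [← hk, ← hs]

end Paths

section ConstrainedSup

variable {ι α : Type*} {f : ι → α} {P : ι → Prop}

lemma finite_range_iSup_prop [ConditionallyCompleteLattice α] (hf : (Set.range f).Finite) :
    (Set.range fun a => ⨆ (_ : P a), f a).Finite := by
  refine (hf.insert (sSup ∅)).subset ?_
  rintro _ ⟨a, rfl⟩
  by_cases ha : P a
  · exact .inr ⟨a, (ciSup_pos (f := fun _ => f a) ha).symm⟩
  · exact .inl (by simp [ha, iSup_of_empty'])

lemma le_iSup_prop [ConditionallyCompleteLattice α] (hf : (Set.range f).Finite) {a : ι}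
    (ha : P a) : f a ≤ ⨆ (a) (_ : P a), f a :=
  le_ciSup_of_le (finite_range_iSup_prop hf).bddAbove a (ciSup_pos (f := fun _ => f a) ha).ge

-- Off `P` the inner supremum is the junk value `sSup ∅`, which is `0` in `ℝ`.
lemma exists_eq_iSup_prop [ConditionallyCompleteLinearOrder α] (hf : (Set.range f).Finite)
    (hbot : ∀ a, P a → sSup ∅ ≤ f a) (hP : ∃ a, P a) : ∃ a, P a ∧ f a = ⨆ (a) (_ : P a), f a := by
  obtain ⟨b, hb⟩ := hP
  obtain ⟨a, ha⟩ : (⨆ (a) (_ : P a), f a) ∈ Set.range fun a => ⨆ (_ : P a), f a :=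
    Set.Nonempty.csSup_mem ⟨_, b, rfl⟩ (finite_range_iSup_prop hf)
  by_cases hPa : P a
  · exact ⟨a, hPa, (ciSup_pos (f := fun _ => f a) hPa).symm.trans ha⟩
  · have hempty : (⨆ (a) (_ : P a), f a) = sSup ∅ := by
      rw [← ha]; simp [hPa, iSup_of_empty']
    exact ⟨b, hb, (le_iSup_prop hf hb).antisymm (hempty.trans_le (hbot b hb))⟩

end ConstrainedSup

section Weights

omit [Fintype 𝒴] [Nonempty 𝒴]

variable {q : 𝒳 × 𝒴 → 𝒳 × 𝒴 → ℝ} {p1 : 𝒳 × 𝒴 → ℝ} {x : ℕ → 𝒳} {t m n : ℕ}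

lemma prodQ_nonneg (hq : ∀ z z', 0 ≤ q z z') (y : ℕ → 𝒴) : 0 ≤ prodQ q x y t n :=
  Finset.prod_nonneg fun _ _ => hq _ _

lemma pJoint_nonneg (hq : ∀ z z', 0 ≤ q z z') (hp1 : ∀ z, 0 ≤ p1 z) (y : ℕ → 𝒴) :
    0 ≤ pJoint q p1 x y n :=
  mul_nonneg (hp1 _) (prodQ_nonneg hq y)

lemma pTrans_nonneg (hq : ∀ z z', 0 ≤ q z z') (i j : 𝒴) : 0 ≤ pTrans q x t n i j :=
  Real.iSup_nonneg fun y => Real.iSup_nonneg fun _ => prodQ_nonneg hq y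

lemma delta_nonneg (hq : ∀ z z', 0 ≤ q z z') (hp1 : ∀ z, 0 ≤ p1 z) (i : 𝒴) :
    0 ≤ delta q p1 x t i :=
  Real.iSup_nonneg fun y => Real.iSup_nonneg fun _ => pJoint_nonneg hq hp1 y

lemma prodQ_mul_prodQ (y : ℕ → 𝒴) (htm : t ≤ m) (hmn : m ≤ n) :
    prodQ q x y t m * prodQ q x y m n = prodQ q x y t n :=
  Finset.prod_Ioc_consecutive _ htm hmn

lemma pJoint_mul_prodQ (y : ℕ → 𝒴) (ht : 1 ≤ t) (htn : t ≤ n) :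
    pJoint q p1 x y t * prodQ q x y t n = pJoint q p1 x y n := by
  rw [pJoint, mul_assoc, prodQ_mul_prodQ y ht htn, pJoint]

lemma prodQ_congr {y y' : ℕ → 𝒴} (h : Set.EqOn y y' (Set.Icc t n)) :
    prodQ q x y t n = prodQ q x y' t n := by
  refine Finset.prod_congr rfl fun k hk => ?_
  obtain ⟨htk, hkn⟩ := Finset.mem_Ioc.1 hk
  rw [h ⟨htk.le, hkn⟩, h ⟨Nat.le_sub_one_of_lt htk, (k.sub_le 1).trans hkn⟩]

lemma pJoint_congr (hn : 1 ≤ n) {y y' : ℕ → 𝒴} (h : Set.EqOn y y' (Set.Icc 1 n)) :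
    pJoint q p1 x y n = pJoint q p1 x y' n := by
  rw [pJoint, h ⟨le_rfl, hn⟩, prodQ_congr h, pJoint]

lemma prodQ_piecewise {a b : ℕ → 𝒴} (hab : a m = b m) (htm : t ≤ m) (hmn : m ≤ n) :
    prodQ q x ((Set.Iic m).piecewise a b) t n = prodQ q x a t m * prodQ q x b m n := by
  rw [← prodQ_mul_prodQ _ htm hmn,
    prodQ_congr ((Set.piecewise_eqOn (Set.Iic m) a b).mono Set.Icc_subset_Iic_self),
    prodQ_congr ((eqOn_Ici_piecewise_Iic hab).mono Set.Icc_subset_Ici_self)]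

lemma pJoint_piecewise {a b : ℕ → 𝒴} (hab : a t = b t) (ht : 1 ≤ t) (htn : t ≤ n) :
    pJoint q p1 x ((Set.Iic t).piecewise a b) n = pJoint q p1 x a t * prodQ q x b t n := by
  rw [pJoint, prodQ_piecewise hab ht htn, Set.piecewise_eq_of_mem _ _ _ (Set.mem_Iic.2 ht),
    pJoint, mul_assoc]

end Weights

section FiniteStates

omit [Fintype 𝒴] [Nonempty 𝒴]

variable [Finite 𝒴] {q : 𝒳 × 𝒴 → 𝒳 × 𝒴 → ℝ} {p1 : 𝒳 × 𝒴 → ℝ} {x : ℕ → 𝒳} {t m n : ℕ}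

lemma finite_range_prodQ : (Set.range fun y => prodQ q x y t n).Finite :=
  finite_range_of_dependsOn (Set.finite_Icc t n) fun _ _ h => prodQ_congr h

lemma finite_range_pJoint (hn : 1 ≤ n) : (Set.range fun y => pJoint q p1 x y n).Finite :=
  finite_range_of_dependsOn (Set.finite_Icc 1 n) fun _ _ h => pJoint_congr hn h

lemma prodQ_le_pTrans (y : ℕ → 𝒴) : prodQ q x y t n ≤ pTrans q x t n (y t) (y n) :=
  le_iSup_prop (P := fun y' => y' t = y t ∧ y' n = y n) finite_range_prodQ ⟨rfl, rfl⟩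

lemma pJoint_le_delta (hn : 1 ≤ n) (y : ℕ → 𝒴) : pJoint q p1 x y n ≤ delta q p1 x n (y n) :=
  le_iSup_prop (P := fun y' => y' n = y n) (finite_range_pJoint hn) rfl

lemma exists_prodQ_eq_pTrans (hq : ∀ z z', 0 ≤ q z z') (htn : t < n) (i j : 𝒴) :
    ∃ y : ℕ → 𝒴, (y t = i ∧ y n = j) ∧ prodQ q x y t n = pTrans q x t n i j :=
  exists_eq_iSup_prop finite_range_prodQ
    (fun y _ => Real.sSup_empty.trans_le (prodQ_nonneg hq y))
    ⟨(Set.Iic t).piecewise (fun _ => i) fun _ => j, by simp, by simp [htn]⟩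

lemma exists_pJoint_eq_delta (hq : ∀ z z', 0 ≤ q z z') (hp1 : ∀ z, 0 ≤ p1 z) (hn : 1 ≤ n)
    (j : 𝒴) : ∃ y : ℕ → 𝒴, y n = j ∧ pJoint q p1 x y n = delta q p1 x n j :=
  exists_eq_iSup_prop (finite_range_pJoint hn)
    (fun y _ => Real.sSup_empty.trans_le (pJoint_nonneg hq hp1 y)) ⟨fun _ => j, rfl⟩

lemma pTrans_mul_pTrans_le (hq : ∀ z z', 0 ≤ q z z') (htm : t < m) (hmn : m < n) (i j k : 𝒴) :
    pTrans q x t m i k * pTrans q x m n k j ≤ pTrans q x t n i j := by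
  obtain ⟨a, ⟨hai, hak⟩, ha⟩ := exists_prodQ_eq_pTrans (x := x) hq htm i k
  obtain ⟨b, ⟨hbk, hbj⟩, hb⟩ := exists_prodQ_eq_pTrans (x := x) hq hmn k j
  have hab : a m = b m := hak.trans hbk.symm
  have hle := prodQ_le_pTrans (q := q) (x := x) (t := t) (n := n) ((Set.Iic m).piecewise a b)
  rwa [prodQ_piecewise hab htm.le hmn.le, Set.piecewise_eq_of_mem _ _ _ (Set.mem_Iic.2 htm.le),
    eqOn_Ici_piecewise_Iic hab (Set.mem_Ici.2 hmn.le), ha, hb, hai, hbj] at hle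

lemma delta_mul_pTrans_le_delta (hq : ∀ z z', 0 ≤ q z z') (hp1 : ∀ z, 0 ≤ p1 z) (ht : 1 ≤ t)
    (htn : t < n) (i j : 𝒴) : delta q p1 x t i * pTrans q x t n i j ≤ delta q p1 x n j := by
  obtain ⟨a, hai, ha⟩ := exists_pJoint_eq_delta (x := x) hq hp1 ht i
  obtain ⟨b, ⟨hbi, hbj⟩, hb⟩ := exists_prodQ_eq_pTrans (x := x) hq htn i j
  have hab : a t = b t := hai.trans hbi.symm
  have hle := pJoint_le_delta (q := q) (p1 := p1) (x := x) (ht.trans htn.le)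
    ((Set.Iic t).piecewise a b)
  rwa [pJoint_piecewise hab ht htn.le, eqOn_Ici_piecewise_Iic hab (Set.mem_Ici.2 htn.le),
    ha, hb, hbj] at hle

lemma IsNode.mono (hq : ∀ z z', 0 ≤ q z z') (hp1 : ∀ z, 0 ≤ p1 z) (htm : t < m) (hmn : m ≤ n)
    {i : 𝒴} (h : IsNode q p1 x t m i) : IsNode q p1 x t n i := by
  rcases hmn.eq_or_lt with rfl | hmn
  · exact h
  intro j k
  obtain ⟨y, ⟨rfl, rfl⟩, hy⟩ := exists_prodQ_eq_pTrans (x := x) hq (htm.trans hmn) k j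
  have hδ (l : 𝒴) := delta_nonneg (x := x) (t := t) hq hp1 l
  calc delta q p1 x t (y t) * pTrans q x t n (y t) (y n)
      = delta q p1 x t (y t) * (prodQ q x y t m * prodQ q x y m n) := by
        rw [prodQ_mul_prodQ y htm.le hmn.le, hy]
    _ ≤ delta q p1 x t (y t) * (pTrans q x t m (y t) (y m) * pTrans q x m n (y m) (y n)) :=
        mul_le_mul_of_nonneg_left (mul_le_mul (prodQ_le_pTrans y) (prodQ_le_pTrans y)
          (prodQ_nonneg hq y) (pTrans_nonneg hq _ _)) (hδ _)
    _ ≤ delta q p1 x t i * (pTrans q x t m i (y m) * pTrans q x m n (y m) (y n)) := by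
        simpa only [mul_assoc] using
          mul_le_mul_of_nonneg_right (h (y m) (y t)) (pTrans_nonneg hq (y m) (y n))
    _ ≤ delta q p1 x t i * pTrans q x t n i (y n) :=
        mul_le_mul_of_nonneg_left (pTrans_mul_pTrans_le hq htm hmn _ _ _) (hδ _)

lemma IsNode.delta_mul_pTrans_eq_delta (hq : ∀ z z', 0 ≤ q z z') (hp1 : ∀ z, 0 ≤ p1 z)
    (ht : 1 ≤ t) (htn : t < n) {i : 𝒴} (h : IsNode q p1 x t n i) (j : 𝒴) :
    delta q p1 x t i * pTrans q x t n i j = delta q p1 x n j := by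
  refine (delta_mul_pTrans_le_delta hq hp1 ht htn i j).antisymm ?_
  obtain ⟨y, rfl, hy⟩ := exists_pJoint_eq_delta (x := x) hq hp1 (ht.trans htn.le) j
  calc delta q p1 x n (y n) = pJoint q p1 x y t * prodQ q x y t n := by
        rw [pJoint_mul_prodQ y ht htn.le, hy]
    _ ≤ delta q p1 x t (y t) * pTrans q x t n (y t) (y n) :=
        mul_le_mul (pJoint_le_delta ht y) (prodQ_le_pTrans y) (prodQ_nonneg hq y)
          (delta_nonneg hq hp1 _)
    _ ≤ delta q p1 x t i * pTrans q x t n i (y n) := h (y n) (y t)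

lemma IsNode.exists_isViterbi_eqOn_Iic (hq : ∀ z z', 0 ≤ q z z') (hp1 : ∀ z, 0 ≤ p1 z)
    (ht : 1 ≤ t) (htn : t < n) {v : ℕ → 𝒴} (hnode : IsNode q p1 x t n (v t))
    (hv : pJoint q p1 x v t = delta q p1 x t (v t)) :
    ∃ w : ℕ → 𝒴, IsViterbi q p1 x n w ∧ Set.EqOn w v (Set.Iic t) := by
  have : Nonempty 𝒴 := ⟨v t⟩
  obtain ⟨j, hj⟩ := Finite.exists_max (delta q p1 x n)
  obtain ⟨b, ⟨hbt, -⟩, hb⟩ := exists_prodQ_eq_pTrans (x := x) hq htn (v t) j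
  refine ⟨(Set.Iic t).piecewise v b, fun y => ?_, Set.piecewise_eqOn _ v b⟩
  calc pJoint q p1 x y n ≤ delta q p1 x n (y n) := pJoint_le_delta (ht.trans htn.le) y
    _ ≤ delta q p1 x n j := hj _
    _ = pJoint q p1 x v t * prodQ q x b t n := by
        rw [hv, hb, hnode.delta_mul_pTrans_eq_delta hq hp1 ht htn]
    _ = pJoint q p1 x ((Set.Iic t).piecewise v b) n :=
        (pJoint_piecewise hbt.symm ht htn.le).symm

lemma isInfViterbi_of_forall_exists_isNode (hq : ∀ z z', 0 ≤ q z z') (hp1 : ∀ z, 0 ≤ p1 z)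
    {v : ℕ → 𝒴} (h : ∀ N, ∃ t ≥ N, pJoint q p1 x v t = delta q p1 x t (v t) ∧
      ∃ m > t, IsNode q p1 x t m (v t)) :
    IsInfViterbi q p1 x v := by
  intro N hN
  obtain ⟨t, hNt, hv, m, htm, hnode⟩ := h N
  refine ⟨m, hNt.trans htm.le, fun n hmn => ?_⟩
  obtain ⟨w, hw, hwv⟩ := (hnode.mono hq hp1 htm hmn).exists_isViterbi_eqOn_Iic hq hp1
    (hN.trans hNt) (htm.trans_le hmn) hv
  exact ⟨w, hw, fun s _ hs => hwv (hs.trans hNt)⟩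

lemma exists_forall_pJoint_eq_delta (hq : ∀ z z', 0 ≤ q z z') (hp1 : ∀ z, 0 ≤ p1 z)
    {u : ℕ → ℕ} (hu : StrictMono u) (hu0 : 1 ≤ u 0) {i : ℕ → 𝒴}
    (hnode : ∀ k, IsNode q p1 x (u k) (u (k + 1)) (i k)) :
    ∃ v : ℕ → 𝒴, ∀ k, v (u k) = i k ∧ pJoint q p1 x v (u k) = delta q p1 x (u k) (i k) := by
  obtain ⟨a, ha0, ha⟩ := exists_pJoint_eq_delta (x := x) hq hp1 hu0 (i 0)
  have hlt (k : ℕ) : u k < u (k + 1) := hu k.lt_succ_self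
  choose b hbi hb using fun k => exists_prodQ_eq_pTrans (x := x) hq (hlt k) (i k) (i (k + 1))
  obtain ⟨c, hc⟩ := exists_eqOn_Icc_of_eq_succ hu fun k => (hbi k).2.trans (hbi (k + 1)).1.symm
  have hci (k : ℕ) : c (u k) = i k := (hc k ⟨le_rfl, (hlt k).le⟩).trans (hbi k).1
  have hac : a (u 0) = c (u 0) := ha0.trans (hci 0).symm
  refine ⟨(Set.Iic (u 0)).piecewise a c, fun k => ⟨?_, ?_⟩⟩
  · rw [eqOn_Ici_piecewise_Iic hac (hu.monotone k.zero_le), hci]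
  rw [pJoint_piecewise hac hu0 (hu.monotone k.zero_le), ha]
  induction k with
  | zero => simp [prodQ]
  | succ k ih =>
    calc delta q p1 x (u 0) (i 0) * prodQ q x c (u 0) (u (k + 1))
        = delta q p1 x (u 0) (i 0) * prodQ q x c (u 0) (u k) * prodQ q x c (u k) (u (k + 1)) := by
          rw [mul_assoc, prodQ_mul_prodQ c (hu.monotone k.zero_le) (hlt k).le]
      _ = delta q p1 x (u k) (i k) * pTrans q x (u k) (u (k + 1)) (i k) (i (k + 1)) := by
          rw [ih, prodQ_congr (hc k), hb]
      _ = delta q p1 x (u (k + 1)) (i (k + 1)) :=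
          (hnode k).delta_mul_pTrans_eq_delta hq hp1 (hu0.trans (hu.monotone k.zero_le)) (hlt k) _

theorem exists_infinite_viterbi_general (hq : ∀ z z', 0 ≤ q z z') (hp1 : ∀ z, 0 ≤ p1 z)
    {u m : ℕ → ℕ} (hu0 : 1 ≤ u 0) (hum : ∀ k, u k < m k) (hmu : ∀ k, m k ≤ u (k + 1))
    {i : ℕ → 𝒴} (hnode : ∀ k, IsNode q p1 x (u k) (m k) (i k)) :
    ∃ v : ℕ → 𝒴, IsInfViterbi q p1 x v ∧ ∀ k, v (u k) = i k := by
  have hu : StrictMono u := strictMono_nat_of_lt_succ fun k => (hum k).trans_le (hmu k)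
  obtain ⟨v, hv⟩ := exists_forall_pJoint_eq_delta hq hp1 hu hu0
    fun k => (hnode k).mono hq hp1 (hum k) (hmu k)
  refine ⟨v, isInfViterbi_of_forall_exists_isNode hq hp1 fun N => ?_, fun k => (hv k).1⟩
  exact ⟨u N, hu.le_apply, (hv N).1.symm ▸ (hv N).2, m N, hum N, (hv N).1.symm ▸ hnode N⟩

end FiniteStates

/-- existence of the infinite Viterbi path from infinitely many separated
nodes. If `u₁ < u₂ < ⋯` (with `u_{k+1} ≥ u_k + r`) is a sequence of `i`-nodes of order
`r ≥ 1`, then `x_{1:∞}` has an infinite Viterbi path `v` with `v_{u_k} = i` for all `k`. -/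
theorem exists_infinite_viterbi (q : 𝒳 × 𝒴 → 𝒳 × 𝒴 → ℝ) (p1 : 𝒳 × 𝒴 → ℝ)
    (hq : ∀ z z' : 𝒳 × 𝒴, 0 ≤ q z z') (hp1 : ∀ z : 𝒳 × 𝒴, 0 ≤ p1 z)
    (x : ℕ → 𝒳) (r : ℕ) (hr : 1 ≤ r) (i : 𝒴) (u : ℕ → ℕ)
    (hu1 : 1 ≤ u 1)
    (hstrict : ∀ k : ℕ, 1 ≤ k → u k < u (k + 1))
    (hsep : ∀ k : ℕ, 1 ≤ k → u k + r ≤ u (k + 1))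
    (hnode : ∀ k : ℕ, 1 ≤ k → IsNode q p1 x (u k) (u k + r) i) :
    ∃ v : ℕ → 𝒴, IsInfViterbi q p1 x v ∧ ∀ k : ℕ, 1 ≤ k → v (u k) = i := by
  have ⟨v, hv, hvi⟩ := exists_infinite_viterbi_general hq hp1 hu1 (m := fun k => u (k + 1) + r)
    (fun _ => by omega) (fun k => hsep (k + 1) (by omega)) fun k => hnode (k + 1) (by omega)
  exact ⟨v, hv, fun k hk => Nat.sub_add_cancel hk ▸ hvi (k - 1)⟩

end PMMViterbi
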